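/- arXiv:1803.08273 — 3 statements merged into one kernel-verified Lean document; each statement's English description precedes it below -/
import Mathlib

section
/- Let F and E be finite-dimensional complex inner product spaces, let T : F → E be a continuous linear map whose adjoint T† satisfies T† ∘ T = id_F, and let S : E → E be a continuous linear map satisfying S ∘ S = id_E. Let λ, Λ be real numbers with Λ ≠ 0, and let v ∈ F satisfy T†(S(T v)) = (λ/Λ) • v. Define U : E → E by U x = i • S(2 • T(T†(x)) − x), and let μ ∈ ℂ satisfy μ² = 1 + (2iλ/Λ)·μ. Then the vector w = T v + (i·μ) • S(T v) satisfies U w = μ • w. -/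
/-!
The plane spanned by `T v` and `S T v` is invariant under the walk `S (2 T T† - 1)`: if
`T† S T v = z v`, the walk sends `T v` to `S T v` and `S T v` to `2 z S T v - T v`. Every root `ν`
of the characteristic polynomial `ν² - 2 z ν + 1` of this action yields the eigenvector
`T v - ν S T v`. The phase `i` turns the eigenvalue `ν` into `μ = i ν`.
-/

section QuantumWalk

variable {R M N : Type*} [CommRing R] [AddCommGroup M] [Module R M] [AddCommGroup N] [Module R N]
  {T : M →ₗ[R] N} {P : N →ₗ[R] M} {S : N →ₗ[R] N} {v : M} {z : R}

/-- The walk operator `S (2 T P - 1)` without its phase. The map `P` plays the role of the adjoint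
of the isometry `T`; when it is a left inverse of `T`, the factor `2 T P - 1` is the reflection
fixing `range T` and negating `ker P`. -/
def quantumWalk (T : M →ₗ[R] N) (P : N →ₗ[R] M) (S : N →ₗ[R] N) : N →ₗ[R] N :=
  S ∘ₗ ((2 : R) • (T ∘ₗ P) - LinearMap.id)

theorem quantumWalk_apply (x : N) : quantumWalk T P S x = S ((2 : R) • T (P x) - x) :=
  rfl

theorem quantumWalk_map (hPT : Function.LeftInverse P T) (v : M) :
    quantumWalk T P S (T v) = S (T v) := by
  rw [quantumWalk_apply, hPT v, two_smul, add_sub_cancel_right]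

theorem quantumWalk_involution_map (hS : Function.Involutive S) (hv : P (S (T v)) = z • v) :
    quantumWalk T P S (S (T v)) = (2 * z) • S (T v) - T v := by
  rw [quantumWalk_apply, hv, map_sub, hS (T v), map_smul, map_smul, map_smul, smul_smul]

theorem quantumWalk_map_sub_smul (hPT : Function.LeftInverse P T) (hS : Function.Involutive S)
    (hv : P (S (T v)) = z • v) {ν : R} (hν : ν ^ 2 + 1 = 2 * z * ν) :
    quantumWalk T P S (T v - ν • S (T v)) = ν • (T v - ν • S (T v)) :=
  calc
    quantumWalk T P S (T v - ν • S (T v)) = S (T v) - ν • ((2 * z) • S (T v) - T v) := by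
      rw [map_sub, map_smul, quantumWalk_map hPT, quantumWalk_involution_map hS hv]
    _ = ν • T v + (1 - 2 * z * ν) • S (T v) := by module
    _ = ν • T v + (-ν ^ 2) • S (T v) := by rw [← hν, sub_add_cancel_right]
    _ = ν • (T v - ν • S (T v)) := by module

theorem quantum_walk_eigenvalue_general (hPT : Function.LeftInverse P T)
    (hS : Function.Involutive S) (hv : P (S (T v)) = z • v) {i μ : R} (hi : i ^ 2 = -1)
    (hμ : μ ^ 2 = 1 + 2 * i * z * μ) :
    i • quantumWalk T P S (T v + (i * μ) • S (T v)) = μ • (T v + (i * μ) • S (T v)) := by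
  have unphased_root : (-(i * μ)) ^ 2 + 1 = 2 * z * -(i * μ) := by
    linear_combination μ ^ 2 * hi - hμ
  have unphased_eigenvector := quantumWalk_map_sub_smul hPT hS hv unphased_root
  have phase_mul_root : i * -(i * μ) = μ := by linear_combination -μ * hi
  rw [neg_smul (i * μ) (S (T v)), sub_neg_eq_add] at unphased_eigenvector
  rw [unphased_eigenvector, smul_smul, phase_mul_root]

end QuantumWalk

/-- Eigenvalue relation for the quantum walk operator `U = iS(2TT† − I)`: if `T† T = id`,
`S S = id`, `T† S T v = (λ/Λ) v` and `μ² = 1 + (2iλ/Λ) μ`, then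
`w = T v + iμ S T v` satisfies `U w = μ w`. -/
theorem quantum_walk_eigenvalue
    {F E : Type*}
    [NormedAddCommGroup F] [InnerProductSpace ℂ F] [FiniteDimensional ℂ F]
    [NormedAddCommGroup E] [InnerProductSpace ℂ E] [FiniteDimensional ℂ E]
    (T : F →L[ℂ] E) (S : E →L[ℂ] E)
    (hT : (ContinuousLinearMap.adjoint T).comp T = ContinuousLinearMap.id ℂ F)
    (hS : S.comp S = ContinuousLinearMap.id ℂ E)
    (lam Lam : ℝ) (hLam : Lam ≠ 0) (v : F)
    (hv : (ContinuousLinearMap.adjoint T) (S (T v)) = ((lam / Lam : ℝ) : ℂ) • v)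
    (μ : ℂ) (hμ : μ ^ 2 = 1 + (2 * Complex.I * (lam : ℂ) / (Lam : ℂ)) * μ)
    (w : E) (hw : w = T v + (Complex.I * μ) • S (T v)) :
    Complex.I • S ((2 : ℂ) • T ((ContinuousLinearMap.adjoint T) w) - w) = μ • w := by
  subst hw
  exact quantum_walk_eigenvalue_general (T := T.toLinearMap)
    (P := (ContinuousLinearMap.adjoint T).toLinearMap) (S := S.toLinearMap)
    (DFunLike.congr_fun hT) (DFunLike.congr_fun hS) hv Complex.I_sq (by rw [hμ]; push_cast; ring)
end

section
/- Let A be a real number with A ≥ 16 and let k be a natural number with (k : ℝ) ≥ 2·log(A)/log(log(A)), where log denotes the natural logarithm. Then A ≤ 4^k · k!. -/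
/-!
Put `L = log A` and `s = √L`, so that `log L = 2 log s`.
The inequality `e log s ≤ s` gives `k ≥ 2 L / log L = s² / log s ≥ e s`, whence
`(k / e) ^ k ≥ s ^ k = exp (k log L / 2) ≥ exp L = A`. Finally `k! ≥ (k / e) ^ k`, because
`k ^ k / k!` is a single term of the exponential series of `e ^ k`.
-/

section

open Real

lemma div_exp_one_pow_le_factorial (n : ℕ) : (n / exp 1) ^ n ≤ (n.factorial : ℝ) := by
  have h : (n : ℝ) ^ n / n.factorial ≤ exp n := pow_div_factorial_le_exp _ n.cast_nonneg n
  rwa [div_pow, exp_one_pow, div_le_comm₀ (exp_pos _) (by positivity)]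

lemma exp_one_mul_sqrt_le_two_mul_div_log {y : ℝ} (hy : 1 < y) :
    exp 1 * √y ≤ 2 * y / log y := by
  have hsqrt : 0 < √y := sqrt_pos.2 (by positivity)
  have hlog : exp 1 * log (√y) ≤ √y := by
    simpa only [exp_log hsqrt] using exp_one_mul_le_exp (x := log (√y))
  rw [le_div_iff₀ (log_pos hy)]
  calc exp 1 * √y * log y = 2 * √y * (exp 1 * log (√y)) := by
        rw [log_sqrt (by positivity)]; ring
    _ ≤ 2 * √y * √y := by gcongr
    _ = 2 * y := by rw [mul_assoc, mul_self_sqrt (by positivity)]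

lemma exp_le_div_exp_one_rpow {x y : ℝ} (hy : 1 < y) (hx : 2 * y / log y ≤ x) :
    exp y ≤ (x / exp 1) ^ x := by
  have hlog : 0 < log y := log_pos hy
  have hx_nonneg : 0 ≤ x := le_trans (by positivity) hx
  have hbase : √y ≤ x / exp 1 := by
    rw [le_div_iff₀' (exp_pos 1)]
    exact (exp_one_mul_sqrt_le_two_mul_div_log hy).trans hx
  have hexponent : y ≤ log (√y) * x := by
    rw [div_le_iff₀ hlog] at hx
    rw [log_sqrt (by positivity)]
    linarith
  calc exp y ≤ exp (log (√y) * x) := exp_le_exp.2 hexponent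
    _ = √y ^ x := (rpow_def_of_pos (sqrt_pos.2 (by positivity)) x).symm
    _ ≤ (x / exp 1) ^ x := by gcongr

theorem factorial_growth_bound_general (A : ℝ) (hA : exp 1 < A) (k : ℕ)
    (hk : 2 * log A / log (log A) ≤ (k : ℝ)) : A ≤ (k.factorial : ℝ) := by
  have hA_pos : 0 < A := (exp_pos 1).trans hA
  have hlog : 1 < log A := (lt_log_iff_exp_lt hA_pos).2 hA
  calc A = exp (log A) := (exp_log hA_pos).symm
    _ ≤ (k / exp 1) ^ (k : ℝ) := exp_le_div_exp_one_rpow hlog hk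
    _ = (k / exp 1) ^ k := rpow_natCast _ k
    _ ≤ k.factorial := div_exp_one_pow_le_factorial k

end

/-- Quantitative factorial growth: if `A ≥ 16` and `k ≥ 2 log A / log log A`, then
`A ≤ 4^k k!`. -/
theorem factorial_growth_bound (A : ℝ) (hA : 16 ≤ A) (k : ℕ)
    (hk : 2 * Real.log A / Real.log (Real.log A) ≤ (k : ℝ)) :
    A ≤ 4 ^ k * (Nat.factorial k : ℝ) :=
  (factorial_growth_bound_general A (by linarith [Real.exp_one_lt_three]) k hk).trans
    (le_mul_of_one_le_left (by positivity) (one_le_pow₀ (by norm_num)))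
end

section
/- Let E and V be finite-dimensional complex inner product spaces, ι : V → E a linear isometry, and P = ι ∘ ι† the orthogonal projection of E onto the range of ι. Let W : E → E be a unitary continuous linear map, let Ṽ and V' be continuous linear maps on V with V' unitary, let ε ≥ 0 with ‖Ṽ − V'‖ ≤ ε (operator norm), and suppose that for every ψ ∈ V, P(W(ι ψ)) = (1/2) • ι(Ṽ ψ). Then for every unit vector ψ ∈ V, ‖(−W ∘ (id − 2P) ∘ W† ∘ (id − 2P) ∘ W)(ι ψ) − ι(V' ψ)‖ ≤ 3ε + ε². -/
/-!
For a unitary `W` and an isometry `ι`, the block `A = κ†Wι` determines the amplified map through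
`-W(1 - 2ιι†)W†(1 - 2κκ†)Wι = 2κA + Wι(1 - 4A†A)`. When `A = Vt / 2` this is `κVt + Wι(1 - Vt†Vt)`,
so its distance to `κV'` is at most `‖Vt - V'‖` plus the failure of `Vt` to be an isometry. Since
`V'†V' = 1`, that failure is controlled by `Vt†Vt - V'†V' = (Vt - V')†Vt + V'†(Vt - V')`.
-/

open ContinuousLinearMap
open scoped InnerProduct

section

variable {𝕜 V U E F : Type*} [RCLike 𝕜]
  [NormedAddCommGroup V] [InnerProductSpace 𝕜 V] [CompleteSpace V]
  [NormedAddCommGroup U] [InnerProductSpace 𝕜 U] [CompleteSpace U]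
  [NormedAddCommGroup E] [InnerProductSpace 𝕜 E] [CompleteSpace E]
  [NormedAddCommGroup F] [InnerProductSpace 𝕜 F] [CompleteSpace F]

theorem norm_le_one_of_adjoint_comp_self_eq_id {T : E →L[𝕜] F}
    (hT : T† ∘L T = .id 𝕜 E) : ‖T‖ ≤ 1 :=
  T.opNorm_le_bound zero_le_one fun x => by
    rw [one_mul, T.norm_map_iff_adjoint_comp_self.2 hT x]

theorem norm_adjoint_comp_self_sub_le (A B : E →L[𝕜] F) :
    ‖A† ∘L A - B† ∘L B‖ ≤ ‖A - B‖ * (‖A‖ + ‖B‖) := by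
  have split : A† ∘L A - B† ∘L B = (A - B)† ∘L A + B† ∘L (A - B) := by
    simp only [map_sub, sub_comp, comp_sub]
    abel
  calc ‖A† ∘L A - B† ∘L B‖
      ≤ ‖(A - B)†‖ * ‖A‖ + ‖B†‖ * ‖A - B‖ := by
        rw [split]
        exact norm_add_le_of_le (opNorm_comp_le _ _) (opNorm_comp_le _ _)
    _ = ‖A - B‖ * (‖A‖ + ‖B‖) := by
        simp only [LinearIsometryEquiv.norm_map]
        ring

theorem norm_adjoint_comp_self_sub_id_le {A B : E →L[𝕜] F} {ε : ℝ}
    (hB : B† ∘L B = .id 𝕜 E) (hAB : ‖A - B‖ ≤ ε) :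
    ‖A† ∘L A - .id 𝕜 E‖ ≤ ε * (2 + ε) := by
  have norm_B : ‖B‖ ≤ 1 := norm_le_one_of_adjoint_comp_self_eq_id hB
  have norm_A : ‖A‖ ≤ 1 + ε := by linarith [norm_le_norm_add_norm_sub' A B]
  calc ‖A† ∘L A - .id 𝕜 E‖
      ≤ ‖A - B‖ * (‖A‖ + ‖B‖) := hB ▸ norm_adjoint_comp_self_sub_le A B
    _ ≤ ε * ((1 + ε) + 1) := by
        have hε : 0 ≤ ε := (norm_nonneg _).trans hAB
        gcongr
    _ = ε * (2 + ε) := by ring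

/-- One round `-W(1 - 2P)W†(1 - 2Q)W` of oblivious amplitude amplification, which amplifies the
block `QWP` of `W`. The input projection `P` and the output projection `Q` are allowed to differ and
to live on different spaces; the textbook round is the case `P = Q`. -/
noncomputable def amplificationRound (W : E →L[𝕜] F) (P : E →L[𝕜] E) (Q : F →L[𝕜] F) : E →L[𝕜] F :=
  -(W ∘L (.id 𝕜 E - (2 : 𝕜) • P) ∘L W† ∘L (.id 𝕜 F - (2 : 𝕜) • Q) ∘L W)

theorem amplificationRound_comp {ι : V →L[𝕜] E} {κ : U →L[𝕜] F} {W : E →L[𝕜] F}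
    {A : V →L[𝕜] U} (hι : ι† ∘L ι = .id 𝕜 V) (hW : W† ∘L W = .id 𝕜 E)
    (hW' : W ∘L W† = .id 𝕜 F) (hA : κ† ∘L W ∘L ι = A) :
    amplificationRound W (ι ∘L ι†) (κ ∘L κ†) ∘L ι =
      (2 : 𝕜) • κ ∘L A + W ∘L ι ∘L (.id 𝕜 V - (4 : 𝕜) • A† ∘L A) := by
  have hA_adj : ι† ∘L W† ∘L κ = A† := by
    simp only [← hA, adjoint_comp, adjoint_adjoint, comp_assoc]
  ext ψ
  have ι_apply (x : V) : (ι†) (ι x) = x := DFunLike.congr_fun hι x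
  have W_apply (x : E) : (W†) (W x) = x := DFunLike.congr_fun hW x
  have W_adj_apply (y : F) : W ((W†) y) = y := DFunLike.congr_fun hW' y
  have A_apply (x : V) : (κ†) (W (ι x)) = A x := DFunLike.congr_fun hA x
  have A_adj_apply (u : U) : (ι†) ((W†) (κ u)) = (A†) u := DFunLike.congr_fun hA_adj u
  simp only [amplificationRound, comp_apply, neg_apply, sub_apply, add_apply, smul_apply, id_apply,
    map_sub, map_smul, ι_apply, W_apply, W_adj_apply, A_apply, A_adj_apply]
  module

theorem amplificationRound_comp_of_half {ι : V →L[𝕜] E} {κ : U →L[𝕜] F} {W : E →L[𝕜] F}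
    {Vt : V →L[𝕜] U} (hι : ι† ∘L ι = .id 𝕜 V) (hW : W† ∘L W = .id 𝕜 E)
    (hW' : W ∘L W† = .id 𝕜 F) (hblock : κ† ∘L W ∘L ι = (1 / 2 : 𝕜) • Vt) :
    amplificationRound W (ι ∘L ι†) (κ ∘L κ†) ∘L ι =
      κ ∘L Vt - W ∘L ι ∘L (Vt† ∘L Vt - .id 𝕜 V) := by
  have adj_half : ((1 / 2 : 𝕜) • Vt)† = (1 / 2 : 𝕜) • Vt† := by
    simp [map_smulₛₗ, RCLike.conj_ofNat]
  rw [amplificationRound_comp hι hW hW' hblock, adj_half]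
  simp only [comp_smul, smul_comp, comp_sub]
  module

theorem norm_amplificationRound_comp_sub_le {ι : V →L[𝕜] E} {κ : U →L[𝕜] F} {W : E →L[𝕜] F}
    {Vt V' : V →L[𝕜] U} {ε : ℝ} (hι : ι† ∘L ι = .id 𝕜 V) (hκ : ‖κ‖ ≤ 1)
    (hW : W† ∘L W = .id 𝕜 E) (hW' : W ∘L W† = .id 𝕜 F) (hV' : V'† ∘L V' = .id 𝕜 V)
    (hVV : ‖Vt - V'‖ ≤ ε) (hblock : κ† ∘L W ∘L ι = (1 / 2 : 𝕜) • Vt) :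
    ‖amplificationRound W (ι ∘L ι†) (κ ∘L κ†) ∘L ι - κ ∘L V'‖ ≤ 3 * ε + ε ^ 2 := by
  have norm_ι : ‖ι‖ ≤ 1 := norm_le_one_of_adjoint_comp_self_eq_id hι
  have norm_W : ‖W‖ ≤ 1 := norm_le_one_of_adjoint_comp_self_eq_id hW
  have isometry_defect : ‖Vt† ∘L Vt - .id 𝕜 V‖ ≤ ε * (2 + ε) :=
    norm_adjoint_comp_self_sub_id_le hV' hVV
  calc ‖amplificationRound W (ι ∘L ι†) (κ ∘L κ†) ∘L ι - κ ∘L V'‖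
      = ‖κ ∘L (Vt - V') - W ∘L ι ∘L (Vt† ∘L Vt - .id 𝕜 V)‖ := by
        rw [amplificationRound_comp_of_half hι hW hW' hblock, comp_sub κ, sub_right_comm]
    _ ≤ ‖κ‖ * ‖Vt - V'‖ + ‖W‖ * (‖ι‖ * ‖Vt† ∘L Vt - .id 𝕜 V‖) := by
        grw [norm_sub_le, opNorm_comp_le, opNorm_comp_le, opNorm_comp_le]
    _ ≤ 1 * ε + 1 * (1 * (ε * (2 + ε))) := by gcongr
    _ = 3 * ε + ε ^ 2 := by ring

theorem oblivious_amplitude_amplification_general (ι : V →ₗᵢ[𝕜] E) (κ : U →ₗᵢ[𝕜] F)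
    {P : E →L[𝕜] E} (hP : P = ι.toContinuousLinearMap ∘L ι.toContinuousLinearMap†)
    {Q : F →L[𝕜] F} (hQ : Q = κ.toContinuousLinearMap ∘L κ.toContinuousLinearMap†)
    {W : E →L[𝕜] F} (hW : W† ∘L W = .id 𝕜 E) (hW' : W ∘L W† = .id 𝕜 F)
    {Vt V' : V →L[𝕜] U} (hV' : V'† ∘L V' = .id 𝕜 V) {ε : ℝ} (hVV : ‖Vt - V'‖ ≤ ε)
    (hblock : ∀ ψ, Q (W (ι ψ)) = (1 / 2 : 𝕜) • κ (Vt ψ)) :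
    ‖amplificationRound W P Q ∘L ι.toContinuousLinearMap - κ.toContinuousLinearMap ∘L V'‖
      ≤ 3 * ε + ε ^ 2 := by
  subst hP hQ
  have hι := (norm_map_iff_adjoint_comp_self ι.toContinuousLinearMap).1 ι.norm_map
  have half_block :
      κ.toContinuousLinearMap† ∘L W ∘L ι.toContinuousLinearMap = (1 / 2 : 𝕜) • Vt := by
    ext ψ
    apply κ.injective
    simpa using hblock ψ
  exact norm_amplificationRound_comp_sub_le hι κ.norm_toContinuousLinearMap_le hW hW' hV' hVV
    half_block

end

/-- Robust oblivious amplitude amplification: if the `P`-projected action of the unitary `W`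
implements `(1/2) Ṽ` on the image of the isometry `ι`, where `Ṽ` is `ε`-close in operator
norm to a unitary `V'`, then one round of `−W(I−2P)W†(I−2P)W` implements `V'` up to
error `3ε + ε²` on unit vectors. -/
theorem oblivious_amplitude_amplification
    {E V : Type*}
    [NormedAddCommGroup E] [InnerProductSpace ℂ E] [FiniteDimensional ℂ E]
    [NormedAddCommGroup V] [InnerProductSpace ℂ V] [FiniteDimensional ℂ V]
    (ι : V →ₗᵢ[ℂ] E)
    (P : E →L[ℂ] E)
    (hP : P = ι.toContinuousLinearMap.comp
        (ContinuousLinearMap.adjoint ι.toContinuousLinearMap))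
    (W : E →L[ℂ] E)
    (hW : (ContinuousLinearMap.adjoint W).comp W = ContinuousLinearMap.id ℂ E ∧
          W.comp (ContinuousLinearMap.adjoint W) = ContinuousLinearMap.id ℂ E)
    (Vt V' : V →L[ℂ] V)
    (hV' : (ContinuousLinearMap.adjoint V').comp V' = ContinuousLinearMap.id ℂ V ∧
           V'.comp (ContinuousLinearMap.adjoint V') = ContinuousLinearMap.id ℂ V)
    (ε : ℝ) (hε : 0 ≤ ε) (hVV : ‖Vt - V'‖ ≤ ε)
    (hblock : ∀ ψ : V, P (W (ι ψ)) = (1 / 2 : ℂ) • ι (Vt ψ)) :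
    ∀ ψ : V, ‖ψ‖ = 1 →
      ‖-(W ((ContinuousLinearMap.id ℂ E - (2 : ℂ) • P)
            ((ContinuousLinearMap.adjoint W)
              ((ContinuousLinearMap.id ℂ E - (2 : ℂ) • P) (W (ι ψ))))))
          - ι (V' ψ)‖ ≤ 3 * ε + ε ^ 2 := by
  intro ψ hψ
  have round_bound :=
    oblivious_amplitude_amplification_general ι ι hP hP hW.1 hW.2 hV'.1 hVV hblock
  exact (le_of_opNorm_le _ round_bound ψ).trans_eq (by rw [hψ, mul_one])
end
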